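/- Let C be a strict tensor C*-category with identity object ι. Then C is a strict tensor [ι,ι]-category: the map sending f ∈ [ι,ι] to the pair of families f^l_{ρ,σ}(t) := f × t, f^r_{ρ,σ}(t) := t × f is a unital homomorphism of [ι,ι] into Z(C) (in particular f^l = f^r), and the tensor product of C is equivariant with respect to the resulting [ι,ι]-action on arrow spaces. -/

import Mathlib

/-!
STATEMENT 10: Let `C` be a strict tensor C*-category with identity object `ι`. Then
`C` is a strict tensor `[ι,ι]`-category: the map sending `f ∈ [ι,ι]` to the pair of
families `f^l_{ρ,σ}(t) := f × t`, `f^r_{ρ,σ}(t) := t × f` is a unital homomorphism of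
`[ι,ι]` into `Z(C)` (in particular `f^l = f^r`), and the tensor product of `C` is
equivariant with respect to the resulting `[ι,ι]`-action on arrow spaces.

A strict tensor C*-category is modelled with objects a monoid (`ρ ⊗ σ = ρ * σ`,
`ι = 1`); since the equalities `1 * ρ = ρ = ρ * 1` of objects are propositional, the
left and right `[ι,ι]`-actions `f × t` and `t × f` on `(ρ,σ)` are obtained by `cast`.
-/

universe u v u' v'

/-- A C*-category structure on a family of Banach spaces `Hom ρ σ` indexed by objects:
bilinear norm-decreasing composition, identities, and an isometric involutive
contravariant `*` satisfying the C*-identity. -/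
structure CStarCategoryStruct {Obj : Type u} (Hom : Obj → Obj → Type v)
    [∀ ρ σ, NormedAddCommGroup (Hom ρ σ)] [∀ ρ σ, NormedSpace ℂ (Hom ρ σ)] :
    Type max u v where
  comp : ∀ {ρ σ τ : Obj}, Hom σ τ → Hom ρ σ → Hom ρ τ
  id : ∀ ρ : Obj, Hom ρ ρ
  star : ∀ {ρ σ : Obj}, Hom ρ σ → Hom σ ρ
  comp_assoc : ∀ {ρ σ τ υ : Obj} (t : Hom τ υ) (u : Hom σ τ) (v : Hom ρ σ),
    comp (comp t u) v = comp t (comp u v)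
  id_comp : ∀ {ρ σ : Obj} (t : Hom ρ σ), comp (id σ) t = t
  comp_id : ∀ {ρ σ : Obj} (t : Hom ρ σ), comp t (id ρ) = t
  add_comp : ∀ {ρ σ τ : Obj} (t t' : Hom σ τ) (u : Hom ρ σ),
    comp (t + t') u = comp t u + comp t' u
  comp_add : ∀ {ρ σ τ : Obj} (t : Hom σ τ) (u u' : Hom ρ σ),
    comp t (u + u') = comp t u + comp t u'
  smul_comp : ∀ {ρ σ τ : Obj} (c : ℂ) (t : Hom σ τ) (u : Hom ρ σ),
    comp (c • t) u = c • comp t u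
  comp_smul : ∀ {ρ σ τ : Obj} (c : ℂ) (t : Hom σ τ) (u : Hom ρ σ),
    comp t (c • u) = c • comp t u
  norm_comp_le : ∀ {ρ σ τ : Obj} (t : Hom σ τ) (u : Hom ρ σ), ‖comp t u‖ ≤ ‖t‖ * ‖u‖
  star_star : ∀ {ρ σ : Obj} (t : Hom ρ σ), star (star t) = t
  star_add : ∀ {ρ σ : Obj} (t t' : Hom ρ σ), star (t + t') = star t + star t'
  star_smul : ∀ {ρ σ : Obj} (c : ℂ) (t : Hom ρ σ),
    star (c • t) = (starRingEnd ℂ) c • star t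
  star_comp : ∀ {ρ σ τ : Obj} (t : Hom σ τ) (u : Hom ρ σ),
    star (comp t u) = comp (star u) (star t)
  star_id : ∀ ρ : Obj, star (id ρ) = id ρ
  norm_star : ∀ {ρ σ : Obj} (t : Hom ρ σ), ‖star t‖ = ‖t‖
  cstar_identity : ∀ {ρ σ : Obj} (t : Hom ρ σ), ‖comp (star t) t‖ = ‖t‖ ^ 2


variable {Obj : Type u} [Monoid Obj] {Hom : Obj → Obj → Type v}
  [∀ ρ σ, NormedAddCommGroup (Hom ρ σ)] [∀ ρ σ, NormedSpace ℂ (Hom ρ σ)]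

/-- A strict tensor structure on a C*-category: an associative bilinear C*-bifunctor
`×` with unit the identity object `1` and commuting with `*`. -/
structure StrictTensorStruct (C : CStarCategoryStruct Hom) : Type max u v where
  tens : ∀ {ρ σ ρ' σ' : Obj}, Hom ρ σ → Hom ρ' σ' → Hom (ρ * ρ') (σ * σ')
  tens_id : ∀ ρ ρ' : Obj, tens (C.id ρ) (C.id ρ') = C.id (ρ * ρ')
  tens_comp : ∀ {ρ σ τ ρ' σ' τ' : Obj} (t : Hom σ τ) (u : Hom ρ σ)
    (t' : Hom σ' τ') (u' : Hom ρ' σ'),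
    tens (C.comp t u) (C.comp t' u') = C.comp (tens t t') (tens u u')
  tens_add_left : ∀ {ρ σ ρ' σ' : Obj} (t t' : Hom ρ σ) (u : Hom ρ' σ'),
    tens (t + t') u = tens t u + tens t' u
  tens_add_right : ∀ {ρ σ ρ' σ' : Obj} (t : Hom ρ σ) (u u' : Hom ρ' σ'),
    tens t (u + u') = tens t u + tens t u'
  tens_smul_left : ∀ {ρ σ ρ' σ' : Obj} (c : ℂ) (t : Hom ρ σ) (u : Hom ρ' σ'),
    tens (c • t) u = c • tens t u
  tens_smul_right : ∀ {ρ σ ρ' σ' : Obj} (c : ℂ) (t : Hom ρ σ) (u : Hom ρ' σ'),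
    tens t (c • u) = c • tens t u
  tens_star : ∀ {ρ σ ρ' σ' : Obj} (t : Hom ρ σ) (u : Hom ρ' σ'),
    C.star (tens t u) = tens (C.star t) (C.star u)
  tens_assoc : ∀ {ρ σ ρ' σ' ρ'' σ'' : Obj} (t : Hom ρ σ) (u : Hom ρ' σ')
    (v : Hom ρ'' σ''), HEq (tens (tens t u) v) (tens t (tens u v))
  one_tens : ∀ {ρ σ : Obj} (t : Hom ρ σ), HEq (tens (C.id 1) t) t
  tens_one : ∀ {ρ σ : Obj} (t : Hom ρ σ), HEq (tens t (C.id 1)) t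
  norm_tens_le : ∀ {ρ σ ρ' σ' : Obj} (t : Hom ρ σ) (u : Hom ρ' σ'),
    ‖tens t u‖ ≤ ‖t‖ * ‖u‖

/-- The left action `f^l_{ρ,σ}(t) = f × t` of `(ι,ι)` on `(ρ,σ)`. -/
def StrictTensorStruct.lact {C : CStarCategoryStruct Hom} (T : StrictTensorStruct C)
    {ρ σ : Obj} (f : Hom 1 1) (t : Hom ρ σ) : Hom ρ σ :=
  cast (by rw [one_mul, one_mul]) (T.tens f t)

/-- The right action `f^r_{ρ,σ}(t) = t × f` of `(ι,ι)` on `(ρ,σ)`. -/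
def StrictTensorStruct.ract {C : CStarCategoryStruct Hom} (T : StrictTensorStruct C)
    {ρ σ : Obj} (f : Hom 1 1) (t : Hom ρ σ) : Hom ρ σ :=
  cast (by rw [mul_one, mul_one]) (T.tens t f)

/-- `[ι,ι] := { f ∈ (ι,ι) : 1_ρ × f = f × 1_ρ for every object ρ }`. -/
def StrictTensorStruct.centralScalars {C : CStarCategoryStruct Hom}
    (T : StrictTensorStruct C) : Set (Hom 1 1) :=
  {f : Hom 1 1 | ∀ ρ : Obj, HEq (T.tens (C.id ρ) f) (T.tens f (C.id ρ))}

/-!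
Functoriality of `×` is the interchange law `(f ∘ g)·(t ∘ u) = (f·t) ∘ (g·u)` for the left action
`f·t := f × t`. Since `1_ι` acts trivially, setting `f` or `g` equal to `1_ι`, or `t` equal to an
identity, turns it into the multiplier identities and the multiplicativity of `f ↦ f·`. The same
holds for the right action, so each of the two actions of `f` is determined by its values on the
identity arrows; these values agree for all objects exactly when `f ∈ [ι,ι]`. Equivariance in the
left tensor factor is associativity of `×`; in the right factor it is associativity for the right
action, transferred along `f^l = f^r`.
-/

section HomCast

variable {X : Type u} {H : X → X → Type v} [∀ ρ σ, NormedAddCommGroup (H ρ σ)]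
  [∀ ρ σ, NormedSpace ℂ (H ρ σ)] {ρ σ τ ρ' σ' τ' : X}

/-- Transport of arrows along equalities of source and target. It relates the arrow space
`(ι × ρ, ι × σ)` to `(ρ, σ)`, and is bundled as a linear isometry so that linearity and norms pass
through it. -/
def homCast (hρ : ρ = ρ') (hσ : σ = σ') : H ρ σ ≃ₗᵢ[ℂ] H ρ' σ' :=
  hρ ▸ hσ ▸ LinearIsometryEquiv.refl ℂ (H ρ σ)

theorem homCast_heq (hρ : ρ = ρ') (hσ : σ = σ') (t : H ρ σ) :
    HEq (homCast hρ hσ t) t := by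
  subst hρ hσ
  rfl

theorem homCast_eq_homCast_iff_heq {ρ'' σ'' : X} (hρ : ρ = ρ'') (hσ : σ = σ'')
    (hρ' : ρ' = ρ'') (hσ' : σ' = σ'') (t : H ρ σ) (t' : H ρ' σ') :
    homCast hρ hσ t = homCast hρ' hσ' t' ↔ HEq t t' := by
  subst hρ hσ hρ' hσ'
  exact heq_iff_eq.symm

theorem CStarCategoryStruct.homCast_comp (C : CStarCategoryStruct H) (hρ : ρ = ρ')
    (hσ : σ = σ') (hτ : τ = τ') (t : H σ τ) (u : H ρ σ) :
    homCast hρ hτ (C.comp t u) = C.comp (homCast hσ hτ t) (homCast hρ hσ u) := by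
  subst hρ hσ hτ
  rfl

theorem CStarCategoryStruct.homCast_star (C : CStarCategoryStruct H) (hρ : ρ = ρ')
    (hσ : σ = σ') (t : H ρ σ) :
    homCast hσ hρ (C.star t) = C.star (homCast hρ hσ t) := by
  subst hρ hσ
  rfl

end HomCast

namespace StrictTensorStruct

variable {C : CStarCategoryStruct Hom} (T : StrictTensorStruct C) {ρ σ τ ρ' σ' : Obj}

theorem tens_homCast_left {ρ₀ σ₀ : Obj} (hρ : ρ₀ = ρ) (hσ : σ₀ = σ) (t : Hom ρ₀ σ₀)
    (u : Hom ρ' σ') :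
    T.tens (homCast hρ hσ t) u =
      homCast (congrArg (· * ρ') hρ) (congrArg (· * σ') hσ) (T.tens t u) := by
  subst hρ hσ
  rfl

theorem tens_homCast_right {ρ₀ σ₀ : Obj} (hρ : ρ₀ = ρ') (hσ : σ₀ = σ') (t : Hom ρ σ)
    (u : Hom ρ₀ σ₀) :
    T.tens t (homCast hρ hσ u) =
      homCast (congrArg (ρ * ·) hρ) (congrArg (σ * ·) hσ) (T.tens t u) := by
  subst hρ hσ
  rfl

theorem lact_eq_homCast (f : Hom 1 1) (t : Hom ρ σ) :
    T.lact f t = homCast (one_mul ρ) (one_mul σ) (T.tens f t) :=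
  eq_of_heq ((cast_heq _ _).trans (homCast_heq _ _ _).symm)

theorem ract_eq_homCast (f : Hom 1 1) (t : Hom ρ σ) :
    T.ract f t = homCast (mul_one ρ) (mul_one σ) (T.tens t f) :=
  eq_of_heq ((cast_heq _ _).trans (homCast_heq _ _ _).symm)

theorem lact_add (f : Hom 1 1) (t t' : Hom ρ σ) :
    T.lact f (t + t') = T.lact f t + T.lact f t' := by
  simp only [lact_eq_homCast, tens_add_right, map_add]

theorem lact_smul (f : Hom 1 1) (c : ℂ) (t : Hom ρ σ) :
    T.lact f (c • t) = c • T.lact f t := by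
  simp only [lact_eq_homCast, tens_smul_right, map_smul]

theorem add_lact (f g : Hom 1 1) (t : Hom ρ σ) :
    T.lact (f + g) t = T.lact f t + T.lact g t := by
  simp only [lact_eq_homCast, tens_add_left, map_add]

theorem smul_lact (c : ℂ) (f : Hom 1 1) (t : Hom ρ σ) :
    T.lact (c • f) t = c • T.lact f t := by
  simp only [lact_eq_homCast, tens_smul_left, map_smul]

theorem norm_lact_le (f : Hom 1 1) (t : Hom ρ σ) : ‖T.lact f t‖ ≤ ‖f‖ * ‖t‖ := by
  rw [lact_eq_homCast, LinearIsometryEquiv.norm_map]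
  exact T.norm_tens_le f t

theorem star_lact (f : Hom 1 1) (t : Hom ρ σ) :
    C.star (T.lact f t) = T.lact (C.star f) (C.star t) := by
  simp only [lact_eq_homCast, ← C.homCast_star, tens_star]

theorem id_lact (t : Hom ρ σ) : T.lact (C.id 1) t = t :=
  eq_of_heq ((cast_heq _ _).trans (T.one_tens t))

theorem id_ract (t : Hom ρ σ) : T.ract (C.id 1) t = t :=
  eq_of_heq ((cast_heq _ _).trans (T.tens_one t))

theorem comp_lact_comp (f g : Hom 1 1) (t : Hom σ τ) (u : Hom ρ σ) :
    T.lact (C.comp f g) (C.comp t u) = C.comp (T.lact f t) (T.lact g u) := by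
  simp only [lact_eq_homCast, tens_comp]
  exact C.homCast_comp _ _ _ _ _

theorem comp_ract_comp (f g : Hom 1 1) (t : Hom σ τ) (u : Hom ρ σ) :
    T.ract (C.comp f g) (C.comp t u) = C.comp (T.ract f t) (T.ract g u) := by
  simp only [ract_eq_homCast, tens_comp]
  exact C.homCast_comp _ _ _ _ _

theorem lact_comp_left (f : Hom 1 1) (t : Hom σ τ) (u : Hom ρ σ) :
    T.lact f (C.comp t u) = C.comp (T.lact f t) u := by
  simpa only [C.comp_id, id_lact] using T.comp_lact_comp f (C.id 1) t u

theorem lact_comp_right (f : Hom 1 1) (t : Hom σ τ) (u : Hom ρ σ) :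
    T.lact f (C.comp t u) = C.comp t (T.lact f u) := by
  simpa only [C.id_comp, id_lact] using T.comp_lact_comp (C.id 1) f t u

theorem ract_comp_left (f : Hom 1 1) (t : Hom σ τ) (u : Hom ρ σ) :
    T.ract f (C.comp t u) = C.comp (T.ract f t) u := by
  simpa only [C.comp_id, id_ract] using T.comp_ract_comp f (C.id 1) t u

theorem comp_lact (f g : Hom 1 1) (t : Hom ρ σ) :
    T.lact (C.comp f g) t = T.lact f (T.lact g t) :=
  calc T.lact (C.comp f g) t
    _ = T.lact (C.comp f g) (C.comp (C.id σ) t) := by rw [C.id_comp]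
    _ = C.comp (T.lact f (C.id σ)) (T.lact g t) := T.comp_lact_comp f g (C.id σ) t
    _ = T.lact f (C.comp (C.id σ) (T.lact g t)) := (T.lact_comp_left f _ _).symm
    _ = T.lact f (T.lact g t) := by rw [C.id_comp]

theorem mem_centralScalars_iff_lact_id_eq_ract_id {f : Hom 1 1} :
    f ∈ T.centralScalars ↔ ∀ ρ : Obj, T.lact f (C.id ρ) = T.ract f (C.id ρ) := by
  simp only [lact_eq_homCast, ract_eq_homCast, homCast_eq_homCast_iff_heq]
  exact forall_congr' fun _ => heq_comm

theorem mem_centralScalars_iff_lact_eq_ract {f : Hom 1 1} :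
    f ∈ T.centralScalars ↔ ∀ (ρ σ : Obj) (t : Hom ρ σ), T.lact f t = T.ract f t := by
  rw [mem_centralScalars_iff_lact_id_eq_ract_id]
  refine ⟨fun hf ρ σ t => ?_, fun hf ρ => hf ρ ρ (C.id ρ)⟩
  calc T.lact f t
    _ = C.comp (T.lact f (C.id σ)) t := by rw [← lact_comp_left, C.id_comp]
    _ = C.comp (T.ract f (C.id σ)) t := by rw [hf σ]
    _ = T.ract f t := by rw [← ract_comp_left, C.id_comp]

theorem tens_lact_left (f : Hom 1 1) (t : Hom ρ σ) (u : Hom ρ' σ') :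
    T.tens (T.lact f t) u = T.lact f (T.tens t u) := by
  rw [lact_eq_homCast, lact_eq_homCast, tens_homCast_left, homCast_eq_homCast_iff_heq]
  exact T.tens_assoc f t u

theorem tens_ract_right (f : Hom 1 1) (t : Hom ρ σ) (u : Hom ρ' σ') :
    T.tens t (T.ract f u) = T.ract f (T.tens t u) := by
  rw [ract_eq_homCast, ract_eq_homCast, tens_homCast_right, homCast_eq_homCast_iff_heq]
  exact (T.tens_assoc t u f).symm

theorem tens_lact_right {f : Hom 1 1} (hf : f ∈ T.centralScalars) (t : Hom ρ σ) (u : Hom ρ' σ') :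
    T.tens t (T.lact f u) = T.lact f (T.tens t u) := by
  rw [T.mem_centralScalars_iff_lact_eq_ract] at hf
  rw [hf, hf, tens_ract_right]

end StrictTensorStruct

theorem strict_tensor_cstar_category_is_tensor_scalar_category_general
    (C : CStarCategoryStruct Hom) (T : StrictTensorStruct C) (f g : Hom 1 1) :
    (f ∈ T.centralScalars ↔ ∀ (ρ σ : Obj) (t : Hom ρ σ), T.lact f t = T.ract f t) ∧
    (∀ (ρ σ τ : Obj) (t : Hom σ τ) (u : Hom ρ σ),
      T.lact f (C.comp t u) = C.comp (T.lact f t) u ∧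
      T.lact f (C.comp t u) = C.comp t (T.lact f u)) ∧
    (∀ (ρ σ : Obj) (t t' : Hom ρ σ), T.lact f (t + t') = T.lact f t + T.lact f t') ∧
    (∀ (ρ σ : Obj) (c : ℂ) (t : Hom ρ σ), T.lact f (c • t) = c • T.lact f t) ∧
    (∀ (ρ σ : Obj) (t : Hom ρ σ), ‖T.lact f t‖ ≤ ‖f‖ * ‖t‖) ∧
    (∀ (ρ σ : Obj) (t : Hom ρ σ), T.lact (C.id 1) t = t) ∧
    (∀ (ρ σ : Obj) (t : Hom ρ σ), T.lact (f + g) t = T.lact f t + T.lact g t) ∧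
    (∀ (ρ σ : Obj) (c : ℂ) (t : Hom ρ σ), T.lact (c • f) t = c • T.lact f t) ∧
    (∀ (ρ σ : Obj) (t : Hom ρ σ), T.lact (C.comp f g) t = T.lact f (T.lact g t)) ∧
    (∀ (ρ σ : Obj) (t : Hom ρ σ), C.star (T.lact f t) = T.lact (C.star f) (C.star t)) ∧
    (∀ (ρ σ ρ' σ' : Obj) (t : Hom ρ σ) (u : Hom ρ' σ'),
      T.tens (T.lact f t) u = T.lact f (T.tens t u) ∧
      (f ∈ T.centralScalars → T.tens t (T.lact f u) = T.lact f (T.tens t u))) :=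
  ⟨T.mem_centralScalars_iff_lact_eq_ract,
    fun _ _ _ t u => ⟨T.lact_comp_left f t u, T.lact_comp_right f t u⟩,
    fun _ _ => T.lact_add f,
    fun _ _ => T.lact_smul f,
    fun _ _ => T.norm_lact_le f,
    fun _ _ => T.id_lact,
    fun _ _ => T.add_lact f g,
    fun _ _ c => T.smul_lact c f,
    fun _ _ => T.comp_lact f g,
    fun _ _ => T.star_lact f,
    fun _ _ _ _ t u => ⟨T.tens_lact_left f t u, fun hf => T.tens_lact_right hf t u⟩⟩

/-- Every strict tensor C*-category is a strict tensor `[ι,ι]`-category: for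
`f, g ∈ [ι,ι]` the pair `(f^l, f^r)` is a multiplier with `f^l = f^r`, i.e. an
element of `Z(C)`, the assignment `f ↦ (f^l, f^r)` is a unital *-homomorphism, and
the tensor product is `[ι,ι]`-equivariant. -/
theorem strict_tensor_cstar_category_is_tensor_scalar_category
    [∀ ρ σ : Obj, CompleteSpace (Hom ρ σ)]
    (C : CStarCategoryStruct Hom) (T : StrictTensorStruct C) :
    ∀ f ∈ T.centralScalars, ∀ g ∈ T.centralScalars,
      -- `f^l = f^r` : the image lies in `Z(C)`
      (∀ (ρ σ : Obj) (t : Hom ρ σ), T.lact f t = T.ract f t) ∧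
      -- `(f^l, f^r)` is a multiplier of `C`
      (∀ (ρ σ τ : Obj) (t : Hom σ τ) (u : Hom ρ σ),
        T.lact f (C.comp t u) = C.comp (T.lact f t) u ∧
        T.lact f (C.comp t u) = C.comp t (T.lact f u)) ∧
      (∀ (ρ σ : Obj) (t t' : Hom ρ σ), T.lact f (t + t') = T.lact f t + T.lact f t') ∧
      (∀ (ρ σ : Obj) (c : ℂ) (t : Hom ρ σ), T.lact f (c • t) = c • T.lact f t) ∧
      (∀ (ρ σ : Obj) (t : Hom ρ σ), ‖T.lact f t‖ ≤ ‖f‖ * ‖t‖) ∧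
      -- `f ↦ (f^l, f^r)` is a unital *-homomorphism `[ι,ι] → Z(C)`
      (∀ (ρ σ : Obj) (t : Hom ρ σ), T.lact (C.id 1) t = t) ∧
      (∀ (ρ σ : Obj) (t : Hom ρ σ), T.lact (f + g) t = T.lact f t + T.lact g t) ∧
      (∀ (ρ σ : Obj) (c : ℂ) (t : Hom ρ σ), T.lact (c • f) t = c • T.lact f t) ∧
      (∀ (ρ σ : Obj) (t : Hom ρ σ), T.lact (C.comp f g) t = T.lact f (T.lact g t)) ∧
      (∀ (ρ σ : Obj) (t : Hom ρ σ), C.star (T.lact f t) = T.lact (C.star f) (C.star t)) ∧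
      -- the tensor product is `[ι,ι]`-equivariant
      (∀ (ρ σ ρ' σ' : Obj) (t : Hom ρ σ) (u : Hom ρ' σ'),
        T.tens (T.lact f t) u = T.lact f (T.tens t u) ∧
        T.tens t (T.lact f u) = T.lact f (T.tens t u)) := by
  intro f hf g _
  simpa only [hf, true_iff, true_imp_iff] using
    strict_tensor_cstar_category_is_tensor_scalar_category_general C T f g
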